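/- The set X = {x/√3 : x ∈ O16, ‖x‖² = 3} of normalized norm-3 vectors of the lattice O16 is a subset of the unit sphere of ℝ^16 with exactly 512 elements, and X is a spherical 5-design (so O16 is a strongly perfect lattice of minimum 3). -/

import Mathlib

noncomputable section

open scoped RealInnerProductSpace

/-- `ℝ^n` with the standard inner product. -/
abbrev E (n : ℕ) := EuclideanSpace ℝ (Fin n)

/-- The standard basis vector `ε i`. -/
def εv {n : ℕ} (i : Fin n) : E n := EuclideanSpace.single i 1

/-- The vector of `ℝ^n` with the given coordinates. -/
def vec {n : ℕ} (x : Fin n → ℝ) : E n := (WithLp.equiv 2 (Fin n → ℝ)).symm x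

/-- The vector of `ℝ^n` with the given integer coordinates. -/
def intVec {n : ℕ} (x : Fin n → ℤ) : E n := (WithLp.equiv 2 (Fin n → ℝ)).symm fun i => (x i : ℝ)

/-- A lattice is integral if all pairwise inner products of its elements are integers. -/
def LatticeIsIntegral {n : ℕ} (L : Submodule ℤ (E n)) : Prop :=
  ∀ x ∈ L, ∀ y ∈ L, ∃ k : ℤ, ⟪x, y⟫ = (k : ℝ)

/-- Two lattices are isometric if a linear isometry of the ambient space carries
one onto the other. -/
def IsometricLattices {n : ℕ} (L M : Submodule ℤ (E n)) : Prop :=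
  ∃ g : E n ≃ₗᵢ[ℝ] E n, g '' (L : Set (E n)) = (M : Set (E n))

def f0 : E 16 :=
  vec ![-1/2, 1/2, 1/2, 1/2, 1/2, 1/2, 1/2, 1/2, -1/2, 1/2, 1/2, 1/2, 1/2, 1/2, 1/2, 1/2]

def g1 : E 16 := εv 0 + εv 4 + εv 8 + εv 12
def g2 : E 16 := εv 0 + εv 2 + εv 4 + εv 6
def g3 : E 16 := εv 0 + εv 2 + εv 8 + εv 10
def g4 : E 16 := εv 0 + εv 2 + εv 12 + εv 14
def g5 : E 16 := εv 0 + εv 1 + εv 2 + εv 3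
def g6 : E 16 := εv 0 + εv 1 + εv 4 + εv 5
def g7 : E 16 := εv 0 + εv 1 + εv 6 + εv 7
def g8 : E 16 := εv 0 + εv 1 + εv 8 + εv 9
def g9 : E 16 := εv 0 + εv 1 + εv 10 + εv 11
def g10 : E 16 := εv 0 + εv 1 + εv 12 + εv 13
def g11 : E 16 := εv 0 + εv 1 + εv 14 + εv 15

/-- The Barnes-Wall lattice `BW₁₆ = ⟨2ε1, …, 2ε16, f0, g1, …, g11⟩`. -/
def BW16 : Submodule ℤ (E 16) :=
  Submodule.span ℤ ((Set.range fun i : Fin 16 => (2 : ℝ) • εv i) ∪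
    {f0, g1, g2, g3, g4, g5, g6, g7, g8, g9, g10, g11})

def f1 : E 16 := vec ![1/2, 1/2, 1/2, 1/2, 1/2, 1/2, 1/2, 1/2, 1, 0, 0, 0, 0, 0, 0, 0]

/-- `O₁₆ = ⟨2ε1, …, 2ε16, f0, f1, g1, …, g11⟩`. -/
def O16 : Submodule ℤ (E 16) := BW16 ⊔ Submodule.span ℤ {f1}

open MeasureTheory

/-- The uniform (rotation-invariant) probability measure on the unit sphere of `ℝ¹⁶`. -/
def sphereUniform : Measure (Metric.sphere (0 : E 16) 1) :=
  ((volume : Measure (E 16)).toSphere Set.univ)⁻¹ • (volume : Measure (E 16)).toSphere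

/-- `X` is a spherical `t`-design: for every polynomial of total degree at most `t`,
the average over `X` equals the average over the sphere with respect to the
rotation-invariant probability measure. -/
def IsSphericalDesign (X : Set (E 16)) (t : ℕ) : Prop :=
  ∀ p : MvPolynomial (Fin 16) ℝ, p.totalDegree ≤ t →
    (∑ᶠ x ∈ X, MvPolynomial.eval (fun i => x i) p) / (X.ncard : ℝ) =
      ∫ ξ, MvPolynomial.eval (fun i => (ξ : E 16) i) p ∂sphereUniform

/-- The set of normalized norm-3 vectors of `O₁₆`. -/
def X19 : Set (E 16) :=
  (fun x => (Real.sqrt 3)⁻¹ • x) '' {x ∈ (O16 : Set (E 16)) | ‖x‖ ^ 2 = 3}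

namespace O16Aux


/-- A linear isometry restricted to the unit sphere. -/
def sphMap (g : E 16 ≃ₗᵢ[ℝ] E 16) (ξ : Metric.sphere (0 : E 16) 1) : Metric.sphere (0 : E 16) 1 :=
  ⟨g ξ, by simp⟩

lemma sphMap_continuous (g : E 16 ≃ₗᵢ[ℝ] E 16) : Continuous (sphMap g) :=
  Continuous.subtype_mk (g.continuous.comp continuous_subtype_val) _

open scoped Pointwise in
lemma map_toSphere (g : E 16 ≃ₗᵢ[ℝ] E 16) :
    (volume : Measure (E 16)).toSphere.map (sphMap g) = (volume : Measure (E 16)).toSphere := by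
  ext s hs
  have hm := (sphMap_continuous g).measurable
  rw [Measure.map_apply hm hs, Measure.toSphere_apply' _ (hm hs), Measure.toSphere_apply' _ hs]
  congr 1
  rw [← MeasurePreserving.measure_preimage_equiv (f := g.toHomeomorph.toMeasurableEquiv)
    g.measurePreserving (Set.Ioo (0 : ℝ) 1 • (Subtype.val '' s))]
  congr 1
  ext x
  simp only [Set.mem_smul, Set.mem_image, Set.mem_preimage, Subtype.exists]
  constructor
  · rintro ⟨r, hr, _, ⟨ξ, hξ, h, rfl⟩, rfl⟩
    refine ⟨r, hr, _, ⟨g ξ, by simpa using hξ, h, rfl⟩, ?_⟩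
    exact (map_smul g r ξ).symm
  · rintro ⟨r, hr, _, ⟨ξ, hξ, h, rfl⟩, hx⟩
    refine ⟨r, hr, _, ⟨g.symm ξ, by simpa using hξ, ?_, rfl⟩, ?_⟩
    · simpa [sphMap] using h
    · apply g.injective
      simp only [map_smul, LinearIsometryEquiv.apply_symm_apply]
      exact hx

lemma map_sphereUniform (g : E 16 ≃ₗᵢ[ℝ] E 16) :
    sphereUniform.map (sphMap g) = sphereUniform := by
  rw [sphereUniform, Measure.map_smul, map_toSphere]

instance : IsProbabilityMeasure sphereUniform := by
  constructor
  rw [sphereUniform, Measure.smul_apply, smul_eq_mul]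
  apply ENNReal.inv_mul_cancel
  · rw [Ne, Measure.measure_univ_eq_zero]
    exact Measure.toSphere_ne_zero _
  · exact measure_ne_top _ _

/-- Integral over the sphere. -/
def I (f : E 16 → ℝ) : ℝ := ∫ ξ, f (ξ : E 16) ∂sphereUniform

lemma I_comp (g : E 16 ≃ₗᵢ[ℝ] E 16) (f : E 16 → ℝ) (hf : Continuous f) :
    I (fun x => f (g x)) = I f := by
  unfold I
  conv_rhs => rw [← map_sphereUniform g]
  rw [integral_map (sphMap_continuous g).measurable.aemeasurable]
  · rfl
  · exact (hf.comp continuous_subtype_val).aestronglyMeasurable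

lemma integrable_cont (f : E 16 → ℝ) (hf : Continuous f) :
    Integrable (fun ξ : Metric.sphere (0 : E 16) 1 => f ξ) sphereUniform := by
  have hc : Continuous (fun ξ : Metric.sphere (0 : E 16) 1 => f ξ) :=
    hf.comp continuous_subtype_val
  exact hc.integrable_of_hasCompactSupport (HasCompactSupport.of_compactSpace _)

lemma I_add (f g : E 16 → ℝ) (hf : Continuous f) (hg : Continuous g) :
    I (fun x => f x + g x) = I f + I g :=
  integral_add (integrable_cont f hf) (integrable_cont g hg)

lemma I_smul (c : ℝ) (f : E 16 → ℝ) : I (fun x => c * f x) = c * I f :=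
  integral_const_mul _ _

lemma I_sum {ι : Type*} (s : Finset ι) (f : ι → E 16 → ℝ) (hf : ∀ i ∈ s, Continuous (f i)) :
    I (fun x => ∑ i ∈ s, f i x) = ∑ i ∈ s, I (f i) :=
  integral_finsetSum _ (fun i hi => integrable_cont (f i) (hf i hi))

lemma I_one : I (fun _ => 1) = 1 := by simp [I]

lemma I_congr (f g : E 16 → ℝ) (h : ∀ x : E 16, ‖x‖ = 1 → f x = g x) : I f = I g := by
  unfold I
  congr 1
  ext ξ
  exact h ξ (by simp)

lemma I_inner (v w : E 16) (k : ℕ) (h : ‖v‖ = ‖w‖) :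
    I (fun x => ⟪x, v⟫ ^ k) = I (fun x => ⟪x, w⟫ ^ k) := by
  rw [← I_comp ((ℝ ∙ (v - w))ᗮ.reflection) (fun x => ⟪x, w⟫ ^ k) (by fun_prop)]
  congr 1
  ext x
  have : (ℝ ∙ (v - w))ᗮ.reflection v = w := Submodule.reflection_sub h
  rw [← LinearIsometryEquiv.inner_map_map (ℝ ∙ (v - w))ᗮ.reflection x v, this]

lemma coord_eq (x : E 16) (i : Fin 16) : x i = ⟪x, EuclideanSpace.single i (1 : ℝ)⟫ := by
  simp [EuclideanSpace.inner_single_right]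

lemma I_pow_eq (i j : Fin 16) (k : ℕ) : I (fun x => x i ^ k) = I (fun x => x j ^ k) := by
  simp only [coord_eq]
  exact I_inner _ _ _ (by simp)

lemma sum_sq (x : E 16) (h : ‖x‖ = 1) : ∑ i, x i ^ 2 = 1 := by
  have := EuclideanSpace.norm_sq_eq x
  rw [h] at this
  simpa using this.symm

lemma I_sq (i : Fin 16) : I (fun x => x i ^ 2) = 1 / 16 := by
  have h1 : I (fun x => ∑ j, x j ^ 2) = 1 := by
    rw [I_congr _ (fun _ => 1) sum_sq, I_one]
  rw [I_sum _ _ (fun i _ => by fun_prop)] at h1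
  rw [Finset.sum_congr rfl (fun j _ => I_pow_eq j i 2)] at h1
  simp at h1
  linarith

lemma I_rel (i j : Fin 16) (h : i ≠ j) :
    I (fun x => x i ^ 4) = 3 * I (fun x => x i ^ 2 * x j ^ 2) := by
  set K := I (fun x => x i ^ 4) with hK
  have hKj : I (fun x => x j ^ 4) = K := I_pow_eq j i 4
  have key : ∀ s : ℝ, s ^ 2 = 1 → I (fun x => (x i + s * x j) ^ 4) = 4 * K := by
    intro s hs
    have : I (fun x => ⟪x, EuclideanSpace.single i (1 : ℝ) + s • EuclideanSpace.single j (1 : ℝ)⟫ ^ 4)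
        = I (fun x => ⟪x, √2 • EuclideanSpace.single i (1 : ℝ)⟫ ^ 4) := by
      apply I_inner
      rw [← sq_eq_sq₀ (norm_nonneg _) (norm_nonneg _), norm_add_sq_real, norm_smul, norm_smul,
        inner_smul_right]
      simp [hs, EuclideanSpace.inner_single_left, h]
      norm_num
    simp only [inner_add_right, inner_smul_right, ← coord_eq] at this
    rw [this, hK, ← I_smul]
    congr 1
    ext x
    rw [mul_pow]
    congr 1
    rw [show (4 : ℕ) = 2 * 2 from rfl, pow_mul, Real.sq_sqrt (by norm_num)]
    norm_num
  have h1 := key 1 (by norm_num)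
  have h2 := key (-1) (by norm_num)
  have h3 : I (fun x => (x i + 1 * x j) ^ 4 + (x i + (-1) * x j) ^ 4) = 4 * K + 4 * K := by
    rw [I_add _ _ (by fun_prop) (by fun_prop), h1, h2]
  have h4 : (fun x : E 16 => (x i + 1 * x j) ^ 4 + (x i + (-1) * x j) ^ 4) =
      fun x => (2 * x i ^ 4 + 2 * x j ^ 4) + 12 * (x i ^ 2 * x j ^ 2) := by
    ext x; ring
  rw [h4, I_add _ _ (by fun_prop) (by fun_prop), I_add _ _ (by fun_prop) (by fun_prop),
    I_smul, I_smul, I_smul, hKj, ← hK] at h3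
  linarith

lemma I_four (i : Fin 16) : I (fun x => x i ^ 4) = 1 / 96 := by
  have h1 : I (fun x => ∑ j, x i ^ 2 * x j ^ 2) = 1 / 16 := by
    rw [← I_sq i]
    apply I_congr
    intro x hx
    rw [← Finset.mul_sum, sum_sq x hx, mul_one]
  rw [I_sum _ _ (fun i _ => by fun_prop), ← Finset.add_sum_erase _ _ (Finset.mem_univ i)] at h1
  have h2 : ∀ j ∈ Finset.univ.erase i, I (fun x => x i ^ 2 * x j ^ 2) = I (fun x => x i ^ 4) / 3 := by
    intro j hj
    rw [I_rel i j (Finset.ne_of_mem_erase hj).symm]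
    ring
  rw [Finset.sum_congr rfl h2] at h1
  have h3 : (fun x : E 16 => x i ^ 2 * x i ^ 2) = fun x => x i ^ 4 := by ext x; ring
  rw [h3] at h1
  simp at h1
  linarith

lemma I_two_two (i j : Fin 16) (h : i ≠ j) : I (fun x => x i ^ 2 * x j ^ 2) = 1 / 288 := by
  have := I_rel i j h
  rw [I_four] at this
  linarith

/-- A monomial with some odd exponent integrates to zero. -/
lemma I_odd (α : Fin 16 → ℕ) (i : Fin 16) (hi : Odd (α i)) : I (fun x => ∏ j, x j ^ α j) = 0 := by
  have h := I_comp ((ℝ ∙ (EuclideanSpace.single i (1 : ℝ) : E 16))ᗮ.reflection)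
    (fun x => ∏ j, x j ^ α j) (by fun_prop)
  have h2 : (fun x : E 16 => ∏ j, ((ℝ ∙ (EuclideanSpace.single i (1 : ℝ) : E 16))ᗮ.reflection x) j ^ α j)
      = fun x => (-1) * ∏ j, x j ^ α j := by
    ext x
    rw [← Finset.mul_prod_erase _ _ (Finset.mem_univ i),
      ← Finset.mul_prod_erase Finset.univ (fun j => x j ^ α j) (Finset.mem_univ i), ← mul_assoc]
    have hr : ∀ j, ((ℝ ∙ (EuclideanSpace.single i (1 : ℝ) : E 16))ᗮ.reflection x) j =
        if j = i then - x j else x j := by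
      intro j
      rw [Submodule.reflection_orthogonal_apply, Submodule.reflection_singleton_apply]
      by_cases hj : j = i
      · subst hj
        simp [EuclideanSpace.inner_single_left]; ring
      · simp [EuclideanSpace.inner_single_left, hj]
    congr 1
    · rw [hr, if_pos rfl, hi.neg_pow]; ring
    · apply Finset.prod_congr rfl
      intro j hj
      rw [hr, if_neg (Finset.ne_of_mem_erase hj)]
  rw [h2, I_smul] at h
  linarith

end O16Aux
namespace O16Aux

/-- The vector whose first eight doubled coordinates are `u` and last eight are `v`. -/
def half (u v : Fin 8 → ℤ) : E 16 := vec (fun i : Fin (8 + 8) => ((Fin.append u v i : ℤ) : ℝ) / 2)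

/-- The congruences describing `O16` in doubled coordinates. -/
def CondP (u v : Fin 8 → ℤ) : Prop :=
  ((u 1 - u 0) % 2 = 0 ∧ (u 2 - u 0) % 2 = 0 ∧ (u 3 - u 0) % 2 = 0 ∧ (u 4 - u 0) % 2 = 0 ∧
    (u 5 - u 0) % 2 = 0 ∧ (u 6 - u 0) % 2 = 0 ∧ (u 7 - u 0) % 2 = 0) ∧
  ((v 1 - v 0) % 2 = 0 ∧ (v 2 - v 0) % 2 = 0 ∧ (v 3 - v 0) % 2 = 0 ∧ (v 4 - v 0) % 2 = 0 ∧
    (v 5 - v 0) % 2 = 0 ∧ (v 6 - v 0) % 2 = 0 ∧ (v 7 - v 0) % 2 = 0) ∧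
  ((u 0 + u 1 + u 2 + u 3 + u 4 + u 5 + u 6 + u 7 + 2 * v 0) % 4 = 0 ∧
    (v 0 + v 1 + v 2 + v 3 + v 4 + v 5 + v 6 + v 7 + 2 * u 0) % 4 = 0) ∧
  ((u 1 + u 3 + u 5 + u 7 + (v 1 + v 3 + v 5 + v 7)) % 4 = 0 ∧
    (u 2 + u 3 + u 6 + u 7 + (v 2 + v 3 + v 6 + v 7)) % 4 = 0 ∧
    (u 4 + u 5 + u 6 + u 7 + (v 4 + v 5 + v 6 + v 7)) % 4 = 0)

instance (u v : Fin 8 → ℤ) : Decidable (CondP u v) := by unfold CondP; infer_instance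

lemma mod_add {m a b c : ℤ} (ha : a % m = 0) (hb : b % m = 0) (h : c = a + b) : c % m = 0 := by
  rw [h]
  exact Int.emod_eq_zero_of_dvd
    (dvd_add (Int.dvd_of_emod_eq_zero ha) (Int.dvd_of_emod_eq_zero hb))

lemma mod_neg {m a c : ℤ} (ha : a % m = 0) (h : c = -a) : c % m = 0 := by
  rw [h]
  exact Int.emod_eq_zero_of_dvd (Int.dvd_neg.2 (Int.dvd_of_emod_eq_zero ha))

lemma CondP.symm {u v : Fin 8 → ℤ} (h : CondP u v) : CondP v u := by
  obtain ⟨a, b, ⟨c1, c2⟩, d1, d2, d3⟩ := h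
  exact ⟨b, a, ⟨c2, c1⟩, by rw [add_comm]; exact d1, by rw [add_comm]; exact d2,
    by rw [add_comm]; exact d3⟩

lemma CondP.add {u v u' v' : Fin 8 → ℤ} (h : CondP u v) (h' : CondP u' v') :
    CondP (u + u') (v + v') := by
  obtain ⟨⟨a1, a2, a3, a4, a5, a6, a7⟩, ⟨b1, b2, b3, b4, b5, b6, b7⟩, ⟨c1, c2⟩, d1, d2, d3⟩ := h
  obtain ⟨⟨x1, x2, x3, x4, x5, x6, x7⟩, ⟨y1, y2, y3, y4, y5, y6, y7⟩, ⟨z1, z2⟩, w1, w2, w3⟩ := h'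
  unfold CondP
  simp only [Pi.add_apply]
  exact ⟨⟨mod_add a1 x1 (by ring), mod_add a2 x2 (by ring), mod_add a3 x3 (by ring),
    mod_add a4 x4 (by ring), mod_add a5 x5 (by ring), mod_add a6 x6 (by ring),
    mod_add a7 x7 (by ring)⟩, ⟨mod_add b1 y1 (by ring), mod_add b2 y2 (by ring),
    mod_add b3 y3 (by ring), mod_add b4 y4 (by ring), mod_add b5 y5 (by ring),
    mod_add b6 y6 (by ring), mod_add b7 y7 (by ring)⟩,
    ⟨mod_add c1 z1 (by ring), mod_add c2 z2 (by ring)⟩,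
    mod_add d1 w1 (by ring), mod_add d2 w2 (by ring), mod_add d3 w3 (by ring)⟩

lemma CondP.neg {u v : Fin 8 → ℤ} (h : CondP u v) : CondP (-u) (-v) := by
  obtain ⟨⟨a1, a2, a3, a4, a5, a6, a7⟩, ⟨b1, b2, b3, b4, b5, b6, b7⟩, ⟨c1, c2⟩, d1, d2, d3⟩ := h
  unfold CondP
  simp only [Pi.neg_apply]
  exact ⟨⟨mod_neg a1 (by ring), mod_neg a2 (by ring), mod_neg a3 (by ring),
    mod_neg a4 (by ring), mod_neg a5 (by ring), mod_neg a6 (by ring),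
    mod_neg a7 (by ring)⟩, ⟨mod_neg b1 (by ring), mod_neg b2 (by ring),
    mod_neg b3 (by ring), mod_neg b4 (by ring), mod_neg b5 (by ring),
    mod_neg b6 (by ring), mod_neg b7 (by ring)⟩,
    ⟨mod_neg c1 (by ring), mod_neg c2 (by ring)⟩,
    mod_neg d1 (by ring), mod_neg d2 (by ring), mod_neg d3 (by ring)⟩

lemma half_apply_lo (u v : Fin 8 → ℤ) (i : Fin 8) :
    half u v (Fin.castAdd 8 i : Fin (8 + 8)) = (u i : ℝ) / 2 := by
  simp [half, vec]

lemma half_apply_hi (u v : Fin 8 → ℤ) (i : Fin 8) :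
    half u v (Fin.natAdd 8 i : Fin (8 + 8)) = (v i : ℝ) / 2 := by
  change ((Fin.append u v (Fin.natAdd 8 i) : ℤ) : ℝ) / 2 = _
  rw [Fin.append_right]

lemma ext16 {x y : E 16} (h1 : ∀ i : Fin 8, x (Fin.castAdd 8 i : Fin (8 + 8)) = y (Fin.castAdd 8 i : Fin (8 + 8)))
    (h2 : ∀ i : Fin 8, x (Fin.natAdd 8 i : Fin (8 + 8)) = y (Fin.natAdd 8 i : Fin (8 + 8))) : x = y := by
  ext i
  revert i
  exact Fin.addCases (m := 8) (n := 8) h1 h2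

/-- The lattice described by congruences. -/
def Lc : AddSubgroup (E 16) where
  carrier := {x | ∃ u v, CondP u v ∧ x = half u v}
  zero_mem' := ⟨0, 0, by decide, by
    apply ext16 <;> intro i <;> simp [half_apply_lo, half_apply_hi, -Fin.natAdd_eq_addNat]⟩
  add_mem' := by
    rintro _ _ ⟨u, v, h, rfl⟩ ⟨u', v', h', rfl⟩
    refine ⟨u + u', v + v', ?_, ?_⟩
    · exact h.add h'
    · apply ext16 <;> intro i <;> simp [half_apply_lo, half_apply_hi, -Fin.natAdd_eq_addNat] <;> ring
  neg_mem' := by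
    rintro _ ⟨u, v, h, rfl⟩
    refine ⟨-u, -v, ?_, ?_⟩
    · exact h.neg
    · apply ext16 <;> intro i <;> simp [half_apply_lo, half_apply_hi, -Fin.natAdd_eq_addNat] <;> ring

lemma gen_mem (x : E 16) (u v : Fin 8 → ℤ) (h : CondP u v)
    (h1 : ∀ i : Fin 16, x i = ((Fin.append u v : Fin (8 + 8) → ℤ) i : ℝ) / 2) :
    x ∈ AddSubgroup.toIntSubmodule Lc := by
  change ∃ u v, CondP u v ∧ x = half u v
  refine ⟨u, v, h, ?_⟩
  ext i
  rw [h1]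
  rfl

lemma O16_le : O16 ≤ AddSubgroup.toIntSubmodule Lc := by
  apply sup_le
  · apply Submodule.span_le.2
    apply Set.union_subset
    · rintro _ ⟨i, rfl⟩
      revert i
      refine Fin.addCases (m := 8) (n := 8) ?_ ?_
      · intro i
        change ∃ u v, CondP u v ∧ _ = half u v
        refine ⟨Pi.single i 4, 0, ?_, ?_⟩
        · revert i; decide
        · apply ext16
          · intro j
            rw [half_apply_lo]
            by_cases h : j = i
            · subst h; simp [εv]; norm_num
            · simp [εv, h, Fin.ext_iff]; omega
          · intro j
            rw [half_apply_hi]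
            simp [εv, Fin.ext_iff]; omega
      · intro i
        change ∃ u v, CondP u v ∧ _ = half u v
        refine ⟨0, Pi.single i 4, ?_, ?_⟩
        · revert i; decide
        · apply ext16
          · intro j
            rw [half_apply_lo]
            simp [εv, Fin.ext_iff]; omega
          · intro j
            rw [half_apply_hi]
            by_cases h : j = i
            · subst h; simp [εv]; norm_num
            · simp [εv, h, Fin.ext_iff]; omega
    · intro x hx
      simp only [Set.mem_insert_iff, Set.mem_singleton_iff] at hx
      rcases hx with rfl | rfl | rfl | rfl | rfl | rfl | rfl | rfl | rfl | rfl | rfl | rfl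
      · refine gen_mem _ ![-1,1,1,1,1,1,1,1] ![-1,1,1,1,1,1,1,1] (by decide) ?_
        intro i; fin_cases i <;> simp [f0, vec, Fin.append, Fin.addCases]
      · refine gen_mem _ ![2,0,0,0,2,0,0,0] ![2,0,0,0,2,0,0,0] (by decide) ?_
        intro i; fin_cases i <;> simp [g1, εv, Fin.append, Fin.addCases]
      · refine gen_mem _ ![2,0,2,0,2,0,2,0] ![0,0,0,0,0,0,0,0] (by decide) ?_
        intro i; fin_cases i <;> simp [g2, εv, Fin.append, Fin.addCases]
      · refine gen_mem _ ![2,0,2,0,0,0,0,0] ![2,0,2,0,0,0,0,0] (by decide) ?_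
        intro i; fin_cases i <;> simp [g3, εv, Fin.append, Fin.addCases]
      · refine gen_mem _ ![2,0,2,0,0,0,0,0] ![0,0,0,0,2,0,2,0] (by decide) ?_
        intro i; fin_cases i <;> simp [g4, εv, Fin.append, Fin.addCases]
      · refine gen_mem _ ![2,2,2,2,0,0,0,0] ![0,0,0,0,0,0,0,0] (by decide) ?_
        intro i; fin_cases i <;> simp [g5, εv, Fin.append, Fin.addCases]
      · refine gen_mem _ ![2,2,0,0,2,2,0,0] ![0,0,0,0,0,0,0,0] (by decide) ?_
        intro i; fin_cases i <;> simp [g6, εv, Fin.append, Fin.addCases]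
      · refine gen_mem _ ![2,2,0,0,0,0,2,2] ![0,0,0,0,0,0,0,0] (by decide) ?_
        intro i; fin_cases i <;> simp [g7, εv, Fin.append, Fin.addCases]
      · refine gen_mem _ ![2,2,0,0,0,0,0,0] ![2,2,0,0,0,0,0,0] (by decide) ?_
        intro i; fin_cases i <;> simp [g8, εv, Fin.append, Fin.addCases]
      · refine gen_mem _ ![2,2,0,0,0,0,0,0] ![0,0,2,2,0,0,0,0] (by decide) ?_
        intro i; fin_cases i <;> simp [g9, εv, Fin.append, Fin.addCases]
      · refine gen_mem _ ![2,2,0,0,0,0,0,0] ![0,0,0,0,2,2,0,0] (by decide) ?_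
        intro i; fin_cases i <;> simp [g10, εv, Fin.append, Fin.addCases]
      · refine gen_mem _ ![2,2,0,0,0,0,0,0] ![0,0,0,0,0,0,2,2] (by decide) ?_
        intro i; fin_cases i <;> simp [g11, εv, Fin.append, Fin.addCases]
  · apply Submodule.span_le.2
    rintro _ rfl
    refine gen_mem _ ![1,1,1,1,1,1,1,1] ![2,0,0,0,0,0,0,0] (by decide) ?_
    intro i; fin_cases i <;> simp [f1, vec, Fin.append, Fin.addCases]

lemma gen_in {x : E 16} (h : x ∈ ({f0, g1, g2, g3, g4, g5, g6, g7, g8, g9, g10, g11} : Set (E 16))) :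
    x ∈ O16 :=
  Submodule.mem_sup_left (Submodule.subset_span (Or.inr h))

lemma eps_in (i : Fin 16) : (2 : ℝ) • εv i ∈ O16 :=
  Submodule.mem_sup_left (Submodule.subset_span (Or.inl ⟨i, rfl⟩))

lemma f1_in : f1 ∈ O16 :=
  Submodule.mem_sup_right (Submodule.subset_span rfl)

lemma half_exists (a b : ℤ) (h : (a - b) % 2 = 0) : ∃ k, a = b + 2 * k :=
  ⟨(a - b) / 2, by omega⟩

lemma par4 {s : ℤ} (a b : ℤ) (hs : s % 4 = 0) (h : s = 4 * a + 2 * b) : ∃ k, b = 2 * k :=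
  ⟨b / 2, by omega⟩

set_option maxHeartbeats 2000000 in
lemma half_mem (u v : Fin 8 → ℤ) (h : CondP u v) : half u v ∈ O16 := by
  obtain ⟨⟨a1, a2, a3, a4, a5, a6, a7⟩, ⟨b1, b2, b3, b4, b5, b6, b7⟩, ⟨c1, c2⟩, d1, d2, d3⟩ := h
  obtain ⟨p1, hp1⟩ := half_exists _ _ a1
  obtain ⟨p2, hp2⟩ := half_exists _ _ a2
  obtain ⟨p3, hp3⟩ := half_exists _ _ a3
  obtain ⟨p4, hp4⟩ := half_exists _ _ a4
  obtain ⟨p5, hp5⟩ := half_exists _ _ a5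
  obtain ⟨p6, hp6⟩ := half_exists _ _ a6
  obtain ⟨p7, hp7⟩ := half_exists _ _ a7
  obtain ⟨q1, hq1⟩ := half_exists _ _ b1
  obtain ⟨q2, hq2⟩ := half_exists _ _ b2
  obtain ⟨q3, hq3⟩ := half_exists _ _ b3
  obtain ⟨q4, hq4⟩ := half_exists _ _ b4
  obtain ⟨q5, hq5⟩ := half_exists _ _ b5
  obtain ⟨q6, hq6⟩ := half_exists _ _ b6
  obtain ⟨q7, hq7⟩ := half_exists _ _ b7
  clear a1 a2 a3 a4 a5 a6 a7 b1 b2 b3 b4 b5 b6 b7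
  rw [hp1, hp3, hp5, hp7, hq1, hq3, hq5, hq7] at d1
  rw [hp2, hp3, hp6, hp7, hq2, hq3, hq6, hq7] at d2
  rw [hp4, hp5, hp6, hp7, hq4, hq5, hq6, hq7] at d3
  rw [hp1, hp2, hp3, hp4, hp5, hp6, hp7] at c1
  rw [hq1, hq2, hq3, hq4, hq5, hq6, hq7] at c2
  obtain ⟨j1, hj1⟩ := par4 (u 0 + v 0) (p1 + p3 + p5 + p7 + q1 + q3 + q5 + q7) d1 (by ring)
  obtain ⟨j2, hj2⟩ := par4 (u 0 + v 0) (p2 + p3 + p6 + p7 + q2 + q3 + q6 + q7) d2 (by ring)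
  obtain ⟨j3, hj3⟩ := par4 (u 0 + v 0) (p4 + p5 + p6 + p7 + q4 + q5 + q6 + q7) d3 (by ring)
  obtain ⟨j4, hj4⟩ := par4 (2 * u 0) (v 0 + p1 + p2 + p3 + p4 + p5 + p6 + p7) c1 (by ring)
  obtain ⟨j5, hj5⟩ := par4 (2 * v 0) (u 0 + q1 + q2 + q3 + q4 + q5 + q6 + q7) c2 (by ring)
  clear c1 c2 d1 d2 d3
  obtain ⟨C2, hC2⟩ : ∃ k, k = p6 - p7 := ⟨_, rfl⟩
  obtain ⟨C3, hC3⟩ : ∃ k, k = q2 - q3 := ⟨_, rfl⟩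
  obtain ⟨C4, hC4⟩ : ∃ k, k = q6 - q7 := ⟨_, rfl⟩
  obtain ⟨C1, hC1⟩ : ∃ k, k = q4 - q5 - C4 := ⟨_, rfl⟩
  obtain ⟨e4, he4⟩ : ∃ k, p4 = C1 + C2 + p5 + 2 * k :=
    ⟨(p4 - (C1 + C2 + p5)) / 2, by
      clear hp1 hp2 hp3 hp4 hp5 hp6 hp7 hq1 hq2 hq3 hq4 hq5 hq6 hq7; omega⟩
  obtain ⟨e8, he8⟩ : ∃ k, 2 * v 0 - u 0 = C1 + C3 + q1 + 2 * k :=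
    ⟨(2 * v 0 - u 0 - (C1 + C3 + q1)) / 2, by
      clear hp1 hp2 hp3 hp4 hp5 hp6 hp7 hq1 hq2 hq3 hq4 hq5 hq6 hq7; omega⟩
  obtain ⟨e2, he2⟩ : ∃ k, p2 = C2 + C3 + C4 + p3 + 2 * k :=
    ⟨(p2 - (C2 + C3 + C4 + p3)) / 2, by
      clear hp1 hp2 hp3 hp4 hp5 hp6 hp7 hq1 hq2 hq3 hq4 hq5 hq6 hq7; omega⟩
  obtain ⟨e1, he1⟩ : ∃ k, p1 = p3 + p5 + p7 + q1 + q3 + q5 + q7 + 2 * k :=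
    ⟨(p1 - (p3 + p5 + p7 + q1 + q3 + q5 + q7)) / 2, by
      clear hp1 hp2 hp3 hp4 hp5 hp6 hp7 hq1 hq2 hq3 hq4 hq5 hq6 hq7; omega⟩
  obtain ⟨e0, he0⟩ : ∃ k, v 0 = C1 + C2 + C3 + C4 + p3 + p5 + p7 + q1 + q3 + q5 + q7 + 2 * k :=
    ⟨(v 0 - (C1 + C2 + C3 + C4 + p3 + p5 + p7 + q1 + q3 + q5 + q7)) / 2, by
      clear hp1 hp2 hp3 hp4 hp5 hp6 hp7 hq1 hq2 hq3 hq4 hq5 hq6 hq7; omega⟩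
  clear hj1 hj2 hj3 hj4 hj5
  have key : half u v = v 0 • f0 + (u 0 - v 0) • f1 + C1 • g1 + C2 • g2 + C3 • g3 + C4 • g4 +
      p3 • g5 + p5 • g6 + p7 • g7 + q1 • g8 + q3 • g9 + q5 • g10 + q7 • g11 +
      e0 • ((2 : ℝ) • εv 0) + e1 • ((2 : ℝ) • εv 1) + e2 • ((2 : ℝ) • εv 2) +
      e4 • ((2 : ℝ) • εv 4) + e8 • ((2 : ℝ) • εv 8) := by
    rify at hp1 hp2 hp3 hp4 hp5 hp6 hp7 hq1 hq2 hq3 hq4 hq5 hq6 hq7 hC1 hC2 hC3 hC4 he0 he1 he2 he4 he8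
    ext i
    fin_cases i <;>
    simp [half, vec, f0, f1, g1, g2, g3, g4, g5, g6, g7, g8, g9, g10, g11, εv, Fin.append,
      Fin.addCases] <;> linarith
  rw [key]
  repeat' apply Submodule.add_mem
  all_goals apply Submodule.smul_mem
  · exact gen_in (by simp)
  · exact f1_in
  all_goals first
    | exact eps_in 0 | exact eps_in 1 | exact eps_in 2 | exact eps_in 4 | exact eps_in 8
    | exact gen_in (by simp)

end O16Aux
namespace O16Aux

/-- Sign of the `i`-th coordinate for the sign pattern encoded by the bits of `N`. -/
def sg (N : ℕ) (i : Fin 8) : ℤ := 1 - 2 * ((N / 2 ^ (i : ℕ) % 2 : ℕ) : ℤ)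

/-- The bit at position `i`. -/
def bt (N i : ℕ) : ℕ := N / 2 ^ i % 2

/-- Parity of the number of set bits. -/
def par (N : ℕ) : ℕ :=
  (bt N 0 + bt N 1 + bt N 2 + bt N 3 + bt N 4 + bt N 5 + bt N 6 + bt N 7) % 2

/-- The exclusive or of the positions of the set bits. -/
def xr (N : ℕ) : ℕ :=
  (bt N 1 + bt N 3 + bt N 5 + bt N 7) % 2 + 2 * ((bt N 2 + bt N 3 + bt N 6 + bt N 7) % 2) +
    4 * ((bt N 4 + bt N 5 + bt N 6 + bt N 7) % 2)

/-- The sign patterns with an even number of minus signs. -/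
def Ev : Finset ℕ := (Finset.range 256).filter (fun N => par N = 0)

/-- The sign attached to a boolean. -/
def bs (s : Bool) : ℤ := if s then 1 else -1

/-- The vector `± 2 ε_j`. -/
def ep (s : Bool) (j : ℕ) (i : Fin 8) : ℤ := if (i : ℕ) = j then 2 * bs s else 0

lemma condP_ep : ∀ N ∈ Ev, ∀ s, CondP (sg N) (ep s (xr N)) := by
  have : ∀ N : Fin 256, par N = 0 → ∀ s, CondP (sg N) (ep s (xr N)) := by decide +kernel
  intro N hN
  simp only [Ev, Finset.mem_filter, Finset.mem_range] at hN
  exact this ⟨N, hN.1⟩ hN.2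

lemma card_Ev : Ev.card = 128 := by decide +kernel

lemma xr_lt (N : ℕ) : xr N < 8 := by
  unfold xr; omega

lemma cond_imp : ∀ N < 256, ∀ j < 8, ∀ s, CondP (sg N) (ep s j) → par N = 0 ∧ xr N = j := by
  have : ∀ N : Fin 256, ∀ j : Fin 8, ∀ s, CondP (sg N) (ep s j) → par N = 0 ∧ xr N = j := by
    decide +kernel
  intro N hN j hj
  exact this ⟨N, hN⟩ ⟨j, hj⟩

lemma sg_surj (u : Fin 8 → ℤ) (hu : ∀ i, u i = 1 ∨ u i = -1) : ∃ N < 256, u = sg N := by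
  have hb : ∀ i, ∃ b : ℕ, b < 2 ∧ u i = 1 - 2 * b := by
    intro i
    rcases hu i with h | h
    · exact ⟨0, by norm_num, by rw [h]; norm_num⟩
    · exact ⟨1, by norm_num, by rw [h]; norm_num⟩
  choose b hb2 hb using hb
  refine ⟨b 0 + 2 * b 1 + 4 * b 2 + 8 * b 3 + 16 * b 4 + 32 * b 5 + 64 * b 6 + 128 * b 7, ?_, ?_⟩
  · have := hb2 0; have := hb2 1; have := hb2 2; have := hb2 3
    have := hb2 4; have := hb2 5; have := hb2 6; have := hb2 7
    omega
  · have h0 := hb2 0; have h1 := hb2 1; have h2 := hb2 2; have h3 := hb2 3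
    have h4 := hb2 4; have h5 := hb2 5; have h6 := hb2 6; have h7 := hb2 7
    ext i
    rw [hb, sg]
    congr 3
    clear hb hu
    fin_cases i <;> simp only [Fin.reduceFinMk, Fin.zero_eta, Fin.mk_one, Fin.isValue] <;>
    norm_num <;> omega

lemma sq_cases_odd (a : ℤ) (h : a % 2 = 1) : (a = 1 ∨ a = -1) ∨ 9 ≤ a ^ 2 := by
  by_cases h1 : a = 1 ∨ a = -1
  · exact Or.inl h1
  · right
    have : 3 ≤ a ∨ a ≤ -3 := by omega
    rcases this with h | h <;> nlinarith

lemma sq_odd (a : ℤ) (h : a % 2 = 1) : 1 ≤ a ^ 2 := by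
  rcases sq_cases_odd a h with (h | h) | h
  · rw [h]; norm_num
  · rw [h]; norm_num
  · linarith

lemma sq_cases_even (a : ℤ) (h : a % 2 = 0) : a = 0 ∨ (a = 2 ∨ a = -2) ∨ 16 ≤ a ^ 2 := by
  by_cases h1 : a = 0 ∨ a = 2 ∨ a = -2
  · tauto
  · right; right
    have : 4 ≤ a ∨ a ≤ -4 := by omega
    rcases this with h | h <;> nlinarith

lemma CondP.parity {u v : Fin 8 → ℤ} (h : CondP u v) (i : Fin 8) : u i % 2 = u 0 % 2 := by
  obtain ⟨⟨a1, a2, a3, a4, a5, a6, a7⟩, -⟩ := h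
  apply Int.emod_emod_of_dvd _ (dvd_refl 2) |>.symm.trans
  fin_cases i <;> simp only [Fin.reduceFinMk, Fin.zero_eta, Fin.mk_one, Fin.isValue] <;> omega

lemma class_half (u v : Fin 8 → ℤ) (h : CondP u v) (hu : u 0 % 2 = 1) (hv : v 0 % 2 = 0)
    (hn : ∑ i, u i ^ 2 + ∑ i, v i ^ 2 = 12) :
    ∃ s, ∃ N ∈ Ev, u = sg N ∧ v = ep s (xr N) := by
  have hou : ∀ i, u i % 2 = 1 := fun i => (h.parity i).trans hu
  have hev : ∀ i, v i % 2 = 0 := fun i => (h.symm.parity i).trans hv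
  have hu8 : ∀ i, u i = 1 ∨ u i = -1 := by
    intro i
    rcases sq_cases_odd _ (hou i) with h | h9
    · exact h
    · exfalso
      have h1 : ∑ j ∈ Finset.univ.erase i, (1 : ℤ) ≤ ∑ j ∈ Finset.univ.erase i, u j ^ 2 :=
        Finset.sum_le_sum (fun j _ => sq_odd _ (hou j))
      have h2 : 0 ≤ ∑ i, v i ^ 2 := Finset.sum_nonneg (fun j _ => sq_nonneg _)
      rw [← Finset.add_sum_erase _ _ (Finset.mem_univ i)] at hn
      have hc : ∑ j ∈ Finset.univ.erase i, (1 : ℤ) = 7 := by simp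
      rw [hc] at h1
      linarith
  have hsu : ∑ i, u i ^ 2 = 8 := by
    have : ∀ i ∈ Finset.univ, u i ^ 2 = 1 := by
      intro i _
      rcases hu8 i with h | h <;> rw [h] <;> norm_num
    rw [Finset.sum_congr rfl this]; simp
  rw [hsu] at hn
  have hsv : ∑ i, v i ^ 2 = 4 := by linarith
  obtain ⟨j, hj⟩ : ∃ j, v j ≠ 0 := by
    by_contra hcon
    push Not at hcon
    simp [hcon] at hsv
  have hrest : 0 ≤ ∑ i ∈ Finset.univ.erase j, v i ^ 2 :=
    Finset.sum_nonneg (fun j _ => sq_nonneg _)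
  rw [← Finset.add_sum_erase _ _ (Finset.mem_univ j)] at hsv
  have hj2 : v j = 2 ∨ v j = -2 := by
    rcases sq_cases_even _ (hev j) with h | h | h
    · exact absurd h hj
    · exact h
    · linarith
  have hjs : v j ^ 2 = 4 := by rcases hj2 with h | h <;> rw [h] <;> norm_num
  have hz : ∑ i ∈ Finset.univ.erase j, v i ^ 2 = 0 := by linarith
  rw [Finset.sum_eq_zero_iff_of_nonneg (fun j _ => sq_nonneg _)] at hz
  obtain ⟨s, hs⟩ : ∃ s, v j = 2 * bs s := by
    rcases hj2 with h | h
    · exact ⟨true, by rw [h]; rfl⟩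
    · exact ⟨false, by rw [h]; rfl⟩
  have hvep : v = ep s j := by
    ext i
    unfold ep
    by_cases hij : i = j
    · subst hij; simp [hs]
    · rw [if_neg (fun hh => hij (Fin.ext hh))]
      have := hz i (by simp [hij])
      exact pow_eq_zero_iff (two_ne_zero) |>.1 this
  obtain ⟨N, hN, hsg⟩ := sg_surj u hu8
  rw [hsg, hvep] at h
  obtain ⟨h1, h2⟩ := cond_imp N hN j j.2 s h
  refine ⟨s, N, ?_, hsg, ?_⟩
  · simp [Ev, hN, h1]
  · rw [h2, hvep]

/-- The index set of the shell. -/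
def T : Finset (Bool × Bool × ℕ) := Finset.univ ×ˢ Finset.univ ×ˢ Ev

/-- The vectors of norm three. -/
def xv (t : Bool × Bool × ℕ) : E 16 :=
  if t.1 then half (sg t.2.2) (ep t.2.1 (xr t.2.2)) else half (ep t.2.1 (xr t.2.2)) (sg t.2.2)

lemma norm_half (u v : Fin 8 → ℤ) :
    ‖half u v‖ ^ 2 = ((∑ i, u i ^ 2 + ∑ i, v i ^ 2 : ℤ) : ℝ) / 4 := by
  rw [EuclideanSpace.norm_sq_eq]
  have := Fin.sum_univ_add (M := ℝ) (a := 8) (b := 8) (fun i : Fin (8 + 8) => ‖(half u v) i‖ ^ 2)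
  refine this.trans ?_
  simp only [half_apply_lo, half_apply_hi, Real.norm_eq_abs, sq_abs, div_pow]
  rw [← Finset.sum_div, ← Finset.sum_div]
  push_cast
  ring

lemma classify (u v : Fin 8 → ℤ) (h : CondP u v) (hn : ∑ i, u i ^ 2 + ∑ i, v i ^ 2 = 12) :
    ∃ t ∈ T, half u v = xv t := by
  rcases Int.emod_two_eq_zero_or_one (u 0) with hu | hu <;>
  rcases Int.emod_two_eq_zero_or_one (v 0) with hv | hv
  · exfalso
    have hh : ∀ i, ∃ k, u i = 2 * k := fun i => ⟨u i / 2, by have := h.parity i; omega⟩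
    have hh' : ∀ i, ∃ k, v i = 2 * k := fun i => ⟨v i / 2, by have := h.symm.parity i; omega⟩
    choose p hp using hh
    choose q hq using hh'
    obtain ⟨-, -, ⟨c1, c2⟩, -⟩ := h
    simp only [hp, hq, Fin.sum_univ_eight] at c1 c2 hn
    have hsq : ∀ a : ℤ, ∃ k, a ^ 2 = a + 2 * k := by
      intro a
      obtain ⟨k, hk⟩ := Int.even_mul_succ_self (a - 1)
      exact ⟨k, by linear_combination hk⟩
    choose r hr using hsq
    simp only [mul_pow] at hn
    simp only [hr (p _), hr (q _)] at hn
    clear hp hq hr hu hv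
    omega
  · obtain ⟨s, N, hN, h1, h2⟩ := class_half v u h.symm hv hu (by rw [add_comm]; exact hn)
    exact ⟨(false, s, N), by simp [T, hN], by simp [xv, h1, h2]⟩
  · obtain ⟨s, N, hN, h1, h2⟩ := class_half u v h hu hv hn
    exact ⟨(true, s, N), by simp [T, hN], by simp [xv, h1, h2]⟩
  · exfalso
    have h1 : ∑ j : Fin 8, (1 : ℤ) ≤ ∑ j, u j ^ 2 :=
      Finset.sum_le_sum (fun j _ => sq_odd _ ((h.parity j).trans hu))
    have h2 : ∑ j : Fin 8, (1 : ℤ) ≤ ∑ j, v j ^ 2 :=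
      Finset.sum_le_sum (fun j _ => sq_odd _ ((h.symm.parity j).trans hv))
    simp at h1 h2
    linarith

lemma sg_sq (N : ℕ) (i : Fin 8) : sg N i ^ 2 = 1 := by
  unfold sg
  rcases Nat.mod_two_eq_zero_or_one (N / 2 ^ (i : ℕ)) with h | h <;> rw [h] <;> norm_num

lemma ep_norm (s : Bool) (j : ℕ) (hj : j < 8) : ∑ i, ep s j i ^ 2 = 4 := by
  rw [Finset.sum_eq_single (⟨j, hj⟩ : Fin 8)]
  · cases s <;> simp [ep, bs]
  · intro i _ hi
    rw [ep, if_neg (fun h => hi (Fin.ext h))]; norm_num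
  · simp

lemma shell_eq : {x ∈ (O16 : Set (E 16)) | ‖x‖ ^ 2 = 3} = xv '' T := by
  ext x
  constructor
  · rintro ⟨hx, hn⟩
    obtain ⟨u, v, h, rfl⟩ := O16_le hx
    rw [norm_half] at hn
    have : (((∑ i, u i ^ 2 + ∑ i, v i ^ 2 : ℤ)) : ℝ) = (12 : ℤ) := by push_cast at *; linarith
    obtain ⟨t, ht, h⟩ := classify u v h (Int.cast_injective this)
    exact ⟨t, ht, h.symm⟩
  · rintro ⟨⟨h, s, N⟩, ht, rfl⟩
    have hN : N ∈ Ev := by simpa [T] using ht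
    have hc := condP_ep N hN s
    have hs : ∑ i, sg N i ^ 2 = 8 := by simp [sg_sq]
    have he := ep_norm s _ (xr_lt N)
    cases h
    · refine ⟨half_mem _ _ hc.symm, ?_⟩
      simp only [xv, Bool.false_eq_true, if_false]
      rw [norm_half, hs, he]; norm_num
    · refine ⟨half_mem _ _ hc, ?_⟩
      simp only [xv, if_true]
      rw [norm_half, hs, he]; norm_num

lemma sg_inj {N M : ℕ} (hN : N < 256) (hM : M < 256) (h : sg N = sg M) : N = M := by
  have hh : ∀ i : Fin 8, N / 2 ^ (i : ℕ) % 2 = M / 2 ^ (i : ℕ) % 2 := by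
    intro i
    have := congrFun h i
    unfold sg at this
    omega
  have h0 := hh 0; have h1 := hh 1; have h2 := hh 2; have h3 := hh 3
  have h4 := hh 4; have h5 := hh 5; have h6 := hh 6; have h7 := hh 7
  norm_num [Fin.val_ofNat] at h0 h1 h2 h3 h4 h5 h6 h7
  omega

lemma half_inj {u v u' v' : Fin 8 → ℤ} (h : half u v = half u' v') : u = u' ∧ v = v' := by
  constructor
  · ext i
    have := half_apply_lo u v i
    rw [h, half_apply_lo] at this
    have h2 : ((u' i : ℤ) : ℝ) = u i := by linarith
    exact (Int.cast_injective h2).symm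
  · ext i
    have := half_apply_hi u v i
    rw [h, half_apply_hi] at this
    have h2 : ((v' i : ℤ) : ℝ) = v i := by linarith
    exact (Int.cast_injective h2).symm

lemma sg_ne_ep (N : ℕ) (s : Bool) (j : ℕ) : sg N ≠ ep s j := by
  intro h
  have h0 := congrFun h 0
  have h1 := sg_sq N 0
  rw [h0] at h1
  unfold ep bs at h1
  split_ifs at h1 <;> norm_num at h1

lemma ep_inj {s s' : Bool} {j : ℕ} (hj : j < 8) (h : ep s j = ep s' j) : s = s' := by
  have := congrFun h ⟨j, hj⟩
  cases s <;> cases s' <;> simp [ep, bs] at this ⊢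

lemma xv_inj : Set.InjOn xv T := by
  rintro ⟨a, s, N⟩ ht ⟨a', s', N'⟩ ht' h
  have hN : N < 256 := by
    have : N ∈ Ev := by simpa [T] using ht
    simp [Ev] at this; exact this.1
  have hN' : N' < 256 := by
    have : N' ∈ Ev := by simpa [T] using ht'
    simp [Ev] at this; exact this.1
  cases a <;> cases a' <;>
  simp only [xv, Bool.false_eq_true, if_false, if_true] at h <;>
  obtain ⟨h1, h2⟩ := half_inj h
  · have := sg_inj hN hN' h2
    subst this
    rw [ep_inj (xr_lt N) h1]
  · exact absurd h2 (sg_ne_ep _ _ _)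
  · exact absurd h1 (sg_ne_ep _ _ _)
  · have := sg_inj hN hN' h1
    subst this
    rw [ep_inj (xr_lt N) h2]

lemma card_T : T.card = 512 := by
  simp [T, Finset.card_product, card_Ev]

end O16Aux
namespace O16Aux

lemma kill (c : ℕ) (f : ℕ → ℤ) (hE : ∀ N ∈ Ev, N ^^^ c ∈ Ev)
    (hf : ∀ N ∈ Ev, f (N ^^^ c) = - f N) : ∑ N ∈ Ev, f N = 0 := by
  have h : ∑ N ∈ Ev, f N = ∑ N ∈ Ev, - f N := by
    apply Finset.sum_nbij' (fun N => N ^^^ c) (fun N => N ^^^ c) hE hE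
    · intro N _; simp
    · intro N _; simp
    · intro N hN; rw [hf N hN]; ring
  rw [Finset.sum_neg_distrib] at h
  linarith

/-- Generators of the first-order Reed-Muller code of length eight. -/
def gB : List ℕ := [255, 170, 204, 240]

/-- Generators of the even weight code of length eight. -/
def gA : List ℕ := [255, 3, 5, 9, 17, 33, 65, 129]

lemma of_Ev {P : ℕ → Prop} (h : ∀ N : Fin 256, par N = 0 → P N) : ∀ N ∈ Ev, P N := by
  intro N hN
  simp only [Ev, Finset.mem_filter, Finset.mem_range] at hN
  exact h ⟨N, hN.1⟩ hN.2

lemma stable : ∀ c ∈ gA ++ gB, ∀ N : Fin 256, par N = 0 → (N : ℕ) ^^^ c < 256 ∧ par (N ^^^ c) = 0 := by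
  decide +kernel

lemma Ev_stable {c : ℕ} (hc : c ∈ gA ++ gB) : ∀ N ∈ Ev, N ^^^ c ∈ Ev :=
  of_Ev (fun N hN => by
    simp only [Ev, Finset.mem_filter, Finset.mem_range]
    exact stable c hc N hN)

lemma sg_xor_aux : ∀ c ∈ gA ++ gB, ∀ N : Fin 256, par N = 0 →
    ∀ i, sg (N ^^^ c) i = sg N i * sg c i := by
  decide +kernel

lemma sg_xor {c : ℕ} (hc : c ∈ gA ++ gB) : ∀ N ∈ Ev, ∀ i, sg (N ^^^ c) i = sg N i * sg c i :=
  of_Ev (sg_xor_aux c hc)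

lemma xr_xor_aux : ∀ c ∈ gB, ∀ N : Fin 256, par N = 0 → xr (N ^^^ c) = xr N := by
  decide +kernel

lemma xr_xor {c : ℕ} (hc : c ∈ gB) : ∀ N ∈ Ev, xr (N ^^^ c) = xr N :=
  of_Ev (xr_xor_aux c hc)

lemma flipA : ∀ m : Fin 256, (m : ℕ) ≠ 0 → ∑ i : Fin 8, bt m i ≤ 5 →
    ∃ c ∈ gA, ∏ i, sg c i ^ bt m i = -1 := by
  decide +kernel

lemma flipB : ∀ m : Fin 256, (m : ℕ) ≠ 0 → ∑ i : Fin 8, bt m i ≤ 3 →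
    ∃ c ∈ gB, ∏ i, sg c i ^ bt m i = -1 := by
  decide +kernel

lemma mask (α : Fin 8 → ℕ) : ∃ m : Fin 256, ∀ i : Fin 8, bt m i = α i % 2 := by
  have h0 := Nat.mod_lt (α 0) two_pos; have h1 := Nat.mod_lt (α 1) two_pos
  have h2 := Nat.mod_lt (α 2) two_pos; have h3 := Nat.mod_lt (α 3) two_pos
  have h4 := Nat.mod_lt (α 4) two_pos; have h5 := Nat.mod_lt (α 5) two_pos
  have h6 := Nat.mod_lt (α 6) two_pos; have h7 := Nat.mod_lt (α 7) two_pos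
  refine ⟨⟨α 0 % 2 + 2 * (α 1 % 2) + 4 * (α 2 % 2) + 8 * (α 3 % 2) + 16 * (α 4 % 2) +
    32 * (α 5 % 2) + 64 * (α 6 % 2) + 128 * (α 7 % 2), by omega⟩, ?_⟩
  intro i
  unfold bt
  fin_cases i <;> simp only [Fin.reduceFinMk, Fin.zero_eta, Fin.mk_one, Fin.isValue] <;>
    norm_num <;> omega

lemma sg_pow (c : ℕ) (i : Fin 8) (k : ℕ) : sg c i ^ (k % 2) = sg c i ^ k := by
  conv_rhs => rw [← Nat.div_add_mod k 2, pow_add, pow_mul, sg_sq, one_pow, one_mul]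

/-- The character associated with the exponents `α`. -/
def chi (α : Fin 8 → ℕ) (N : ℕ) : ℤ := ∏ i, sg N i ^ α i

lemma chi_xor (α : Fin 8 → ℕ) {c : ℕ} (hc : c ∈ gA ++ gB) (h : chi α c = -1) :
    ∀ N ∈ Ev, chi α (N ^^^ c) = - chi α N := by
  intro N hN
  have : chi α (N ^^^ c) = chi α N * chi α c := by
    unfold chi
    rw [← Finset.prod_mul_distrib]
    apply Finset.prod_congr rfl
    intro i _
    rw [sg_xor hc N hN, mul_pow]
  rw [this, h]; ring

lemma flip_of_mask (α : Fin 8 → ℕ) (m : Fin 256) (hm : ∀ i : Fin 8, bt m i = α i % 2) (c : ℕ)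
    (h : ∏ i, sg c i ^ bt m i = -1) : chi α c = -1 := by
  rw [← h]
  unfold chi
  apply Finset.prod_congr rfl
  intro i _
  rw [hm, sg_pow]

lemma mask_ne (α : Fin 8 → ℕ) (m : Fin 256) (hm : ∀ i : Fin 8, bt m i = α i % 2)
    (hodd : ∃ i, Odd (α i)) : (m : ℕ) ≠ 0 := by
  intro h
  obtain ⟨i, hi⟩ := hodd
  have := hm i
  rw [h, Nat.odd_iff.1 hi] at this
  simp [bt] at this

lemma mask_sum (α : Fin 8 → ℕ) (m : Fin 256) (hm : ∀ i : Fin 8, bt m i = α i % 2) :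
    ∑ i : Fin 8, bt m i ≤ ∑ i, α i := by
  apply Finset.sum_le_sum
  intro i _
  rw [hm]
  exact Nat.mod_le _ _

lemma sumA (α : Fin 8 → ℕ) (hodd : ∃ i, Odd (α i)) (hs : ∑ i, α i ≤ 5) (w : ℤ) :
    ∑ N ∈ Ev, chi α N * w = 0 := by
  obtain ⟨m, hm⟩ := mask α
  obtain ⟨c, hc, h⟩ := flipA m (mask_ne α m hm hodd) ((mask_sum α m hm).trans hs)
  have hc' : c ∈ gA ++ gB := List.mem_append_left _ hc
  apply kill c _ (Ev_stable hc')
  intro N hN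
  rw [chi_xor α hc' (flip_of_mask α m hm c h) N hN]; ring

lemma sumB (α : Fin 8 → ℕ) (hodd : ∃ i, Odd (α i)) (hs : ∑ i, α i ≤ 3) (w : ℕ → ℤ) :
    ∑ N ∈ Ev, chi α N * w (xr N) = 0 := by
  obtain ⟨m, hm⟩ := mask α
  obtain ⟨c, hc, h⟩ := flipB m (mask_ne α m hm hodd) ((mask_sum α m hm).trans hs)
  have hc' : c ∈ gA ++ gB := List.mem_append_right _ hc
  apply kill c _ (Ev_stable hc')
  intro N hN
  rw [chi_xor α hc' (flip_of_mask α m hm c h) N hN, xr_xor hc N hN]; ring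

/-- The monomial with exponents `β` at `± 2 ε_j`, summed over the sign. -/
def W (β : Fin 8 → ℕ) (j : ℕ) : ℤ := ∑ s, ∏ i, ep s j i ^ β i

/-- The moment of one half of the shell. -/
def S0 (α β : Fin 8 → ℕ) : ℤ := ∑ N ∈ Ev, chi α N * W β (xr N)

lemma W_odd (β : Fin 8 → ℕ) (hodd : ∃ i, Odd (β i)) (j : ℕ) : W β j = 0 := by
  obtain ⟨k, hk⟩ := hodd
  unfold W
  rw [Fintype.sum_bool, ← Finset.mul_prod_erase _ _ (Finset.mem_univ k),
    ← Finset.mul_prod_erase Finset.univ (fun i => ep false j i ^ β i) (Finset.mem_univ k)]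
  by_cases hkj : (k : ℕ) = j
  · have h1 : ∏ i ∈ Finset.univ.erase k, ep true j i ^ β i =
        ∏ i ∈ Finset.univ.erase k, ep false j i ^ β i := by
      apply Finset.prod_congr rfl
      intro i hi
      have : (i : ℕ) ≠ j := fun h => Finset.ne_of_mem_erase hi (Fin.ext (h.trans hkj.symm))
      simp [ep, this]
    have h2 : ep true j k = - ep false j k := by simp [ep, hkj, bs]
    rw [h1, h2, hk.neg_pow]; ring
  · have : ∀ s, ep s j k ^ β k = 0 := by
      intro s
      rw [ep, if_neg hkj, zero_pow hk.pos.ne']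
    rw [this, this]; ring

lemma S0_odd (α β : Fin 8 → ℕ) (hs : ∑ i, α i + ∑ i, β i ≤ 5)
    (hodd : (∃ i, Odd (α i)) ∨ ∃ i, Odd (β i)) : S0 α β = 0 := by
  unfold S0
  by_cases hb : ∃ i, Odd (β i)
  · apply Finset.sum_eq_zero
    intro N _
    rw [W_odd β hb, mul_zero]
  have ha := hodd.resolve_right hb
  by_cases h0 : β = 0
  · have : ∀ j, W β j = 2 := by intro j; simp [W, h0]
    simp only [this]
    exact sumA α ha (by omega) 2
  · have h2 : 2 ≤ ∑ i, β i := by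
      obtain ⟨i, hi⟩ := Function.ne_iff.1 h0
      simp only [Pi.zero_apply] at hi
      push Not at hb
      have h3 := Nat.not_odd_iff_even.1 (hb i)
      obtain ⟨r, hr⟩ := h3
      have h4 : β i ≤ ∑ i, β i := Finset.single_le_sum (fun _ _ => Nat.zero_le _) (Finset.mem_univ i)
      omega
    exact sumB α ha (by omega) _

lemma fiber_card : ∀ j ∈ Finset.range 8, (Ev.filter (fun N => xr N = j)).card = 16 := by
  decide +kernel

lemma S0_even (α β : Fin 8 → ℕ) (ha : ∀ i, Even (α i)) :
    S0 α β = 16 * ∑ j ∈ Finset.range 8, W β j := by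
  have h1 : ∀ N, chi α N = 1 := by
    intro N
    apply Finset.prod_eq_one
    intro i _
    obtain ⟨r, hr⟩ := ha i
    rw [hr, ← two_mul, pow_mul, sg_sq, one_pow]
  unfold S0
  simp only [h1, one_mul]
  rw [← Finset.sum_fiberwise_of_maps_to (s := Ev) (t := Finset.range 8) (g := xr)
    (fun N _ => Finset.mem_range.2 (xr_lt N)), Finset.mul_sum]
  apply Finset.sum_congr rfl
  intro j hj
  rw [Finset.sum_congr rfl (g := fun _ => W β j)
    (fun N hN => by rw [(Finset.mem_filter.1 hN).2]), Finset.sum_const, fiber_card j hj]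
  simp

/-- The lower half of the exponents. -/
def lo (d : Fin 16 → ℕ) (i : Fin 8) : ℕ := d (Fin.castAdd 8 i : Fin (8 + 8))
/-- The upper half of the exponents. -/
def hi (d : Fin 16 → ℕ) (i : Fin 8) : ℕ := d (Fin.natAdd 8 i : Fin (8 + 8))

/-- Moments of the shell in doubled coordinates. -/
def S (d : Fin 16 → ℕ) : ℤ := S0 (lo d) (hi d) + S0 (hi d) (lo d)

lemma sum_lo_hi (d : Fin 16 → ℕ) : ∑ i, d i = ∑ i, lo d i + ∑ i, hi d i :=
  Fin.sum_univ_add (a := 8) (b := 8) d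

lemma S_odd (d : Fin 16 → ℕ) (hs : ∑ i, d i ≤ 5) (hodd : ∃ i, Odd (d i)) : S d = 0 := by
  have h : (∃ i, Odd (lo d i)) ∨ ∃ i, Odd (hi d i) := by
    obtain ⟨i, hi⟩ := hodd
    revert i
    refine Fin.addCases (m := 8) (n := 8) ?_ ?_
    · intro i h; exact Or.inl ⟨i, h⟩
    · intro i h; exact Or.inr ⟨i, h⟩
  rw [sum_lo_hi] at hs
  rw [S, S0_odd _ _ hs h, S0_odd _ _ (by omega) h.symm, add_zero]

lemma S_even (d : Fin 16 → ℕ) (he : ∀ i, Even (d i)) :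
    S d = 16 * (∑ j ∈ Finset.range 8, W (hi d) j + ∑ j ∈ Finset.range 8, W (lo d) j) := by
  rw [S, S0_even (lo d) _ (fun i => he _), S0_even (hi d) _ (fun i => he _)]; ring

lemma even_single (i : Fin 16) (j : Fin 16) : Even ((Pi.single i 2 : Fin 16 → ℕ) j) := by
  by_cases h : j = i
  · subst h; simp
  · simp [h]

lemma S_zero : S 0 = 512 := by
  rw [S_even _ (by simp)]
  decide +kernel

lemma S_two (i : Fin 16) : S (Pi.single i 2) = 384 := by
  rw [S_even _ (even_single i)]
  revert i
  decide +kernel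

lemma S_four (i j : Fin 16) :
    S (Pi.single i 2 + Pi.single j 2) = if i = j then 768 else 256 := by
  rw [S_even (Pi.single i 2 + Pi.single j 2) (fun k => (even_single i k).add (even_single j k))]
  revert i j
  decide +kernel

end O16Aux
namespace O16Aux

/-- The doubled coordinates of the shell vectors. -/
def phi (t : Bool × Bool × ℕ) : Fin (8 + 8) → ℤ :=
  if t.1 then Fin.append (sg t.2.2) (ep t.2.1 (xr t.2.2))
  else Fin.append (ep t.2.1 (xr t.2.2)) (sg t.2.2)

lemma xv_apply (t : Bool × Bool × ℕ) (k : Fin 16) : xv t k = (phi t k : ℝ) / 2 := by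
  obtain ⟨a, s, N⟩ := t
  cases a <;> rfl

lemma prod_append (u v : Fin 8 → ℤ) (d : Fin 16 → ℕ) :
    ∏ k : Fin 16, (Fin.append u v : Fin (8 + 8) → ℤ) k ^ d k =
      (∏ i, u i ^ lo d i) * ∏ i, v i ^ hi d i := by
  refine (Fin.prod_univ_add (a := 8) (b := 8)
    (fun k : Fin (8 + 8) => (Fin.append u v : Fin (8 + 8) → ℤ) k ^ d k)).trans ?_
  simp only [Fin.append_left, Fin.append_right]
  rfl

lemma S0_eq (α β : Fin 8 → ℕ) : S0 α β =
    ∑ s, ∑ N ∈ Ev, (∏ i, sg N i ^ α i) * ∏ i, ep s (xr N) i ^ β i := by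
  rw [Finset.sum_comm]
  unfold S0 W chi
  simp only [Finset.mul_sum]

lemma sum_T (d : Fin 16 → ℕ) : ∑ t ∈ T, ∏ k : Fin 16, phi t k ^ d k = S d := by
  have h1 : ∀ s N, ∏ k : Fin 16, phi (true, s, N) k ^ d k =
      (∏ i, sg N i ^ lo d i) * ∏ i, ep s (xr N) i ^ hi d i := fun s N => prod_append _ _ _
  have h2 : ∀ s N, ∏ k : Fin 16, phi (false, s, N) k ^ d k =
      (∏ i, sg N i ^ hi d i) * ∏ i, ep s (xr N) i ^ lo d i :=
    fun s N => (prod_append _ _ _).trans (mul_comm _ _)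
  rw [S, S0_eq, S0_eq, T]
  simp only [Finset.sum_product, Fintype.sum_bool, h1, h2]

/-- The normalized shell vectors. -/
def nv (t : Bool × Bool × ℕ) : E 16 := (Real.sqrt 3)⁻¹ • xv t

lemma X19_eq : X19 = nv '' T := by
  rw [X19, shell_eq, Set.image_image]
  rfl

lemma nv_inj : Set.InjOn nv T := by
  intro t ht t' ht' h
  apply xv_inj ht ht'
  have : (Real.sqrt 3)⁻¹ ≠ 0 := by positivity
  exact smul_right_injective _ this h

lemma nv_sum (d : Fin 16 → ℕ) : ∑ t ∈ T, ∏ k, nv t k ^ d k =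
    ((Real.sqrt 3)⁻¹ / 2) ^ (∑ k, d k) * (S d : ℝ) := by
  rw [← sum_T]
  push_cast
  rw [Finset.mul_sum]
  apply Finset.sum_congr rfl
  intro t _
  rw [← Finset.prod_pow_eq_pow_sum, ← Finset.prod_mul_distrib]
  apply Finset.prod_congr rfl
  intro k _
  rw [← mul_pow]
  congr 1
  change (Real.sqrt 3)⁻¹ * xv t k = _
  rw [xv_apply]
  ring

lemma peel (d : Fin 16 → ℕ) (he : ∀ i, Even (d i)) (h0 : d ≠ 0) :
    ∃ (i : Fin 16) (e : Fin 16 → ℕ), d = Pi.single i 2 + e ∧ (∀ i, Even (e i)) ∧ ∑ k, d k = 2 + ∑ k, e k := by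
  obtain ⟨i, hi⟩ := Function.ne_iff.1 h0
  simp only [Pi.zero_apply] at hi
  have h2 : 2 ≤ d i := by
    obtain ⟨r, hr⟩ := he i
    omega
  have hd : d = Pi.single i 2 + (fun k => d k - (Pi.single i 2 : Fin 16 → ℕ) k) := by
    ext k
    by_cases h : k = i
    · subst h; simp; omega
    · simp [h]
  refine ⟨i, fun k => d k - (Pi.single i 2 : Fin 16 → ℕ) k, hd, ?_, ?_⟩
  · intro k
    by_cases h : k = i
    · subst h; simp only [Pi.single_eq_same]
      obtain ⟨r, hr⟩ := he k
      exact ⟨r - 1, by omega⟩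
    · simpa [h] using he k
  · conv_lhs => rw [hd]
    simp only [Pi.add_apply, Finset.sum_add_distrib]
    simp

lemma even_cases (d : Fin 16 → ℕ) (he : ∀ i, Even (d i)) (hs : ∑ k, d k ≤ 5) :
    d = 0 ∨ (∃ i, d = Pi.single i 2) ∨ ∃ i j, d = Pi.single i 2 + Pi.single j 2 := by
  by_cases h0 : d = 0
  · exact Or.inl h0
  right
  obtain ⟨i, e, hd, he1, hs1⟩ := peel d he h0
  by_cases h1 : e = 0
  · exact Or.inl ⟨i, by rw [hd, h1, add_zero]⟩
  right
  obtain ⟨j, e', hd', he2, hs2⟩ := peel e he1 h1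
  by_cases h2 : e' = 0
  · exact ⟨i, j, by rw [hd, hd', h2, add_zero]⟩
  · obtain ⟨k, e'', -, -, hs3⟩ := peel e' he2 h2
    omega

lemma sq3 : ((Real.sqrt 3)⁻¹ / 2) ^ 2 = 1 / 12 := by
  rw [div_pow, inv_pow, Real.sq_sqrt (by norm_num)]; norm_num

lemma prod_single (x : E 16) (i : Fin 16) :
    ∏ k, x k ^ (Pi.single i 2 : Fin 16 → ℕ) k = x i ^ 2 := by
  rw [Finset.prod_eq_single i]
  · simp
  · intro k _ hk; simp [hk]
  · simp

lemma moment (d : Fin 16 → ℕ) (hs : ∑ k, d k ≤ 5) :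
    (∑ t ∈ T, ∏ k, nv t k ^ d k) = 512 * I (fun x => ∏ k, x k ^ d k) := by
  rw [nv_sum]
  by_cases hodd : ∃ i, Odd (d i)
  · obtain ⟨i, hi⟩ := hodd
    rw [S_odd d hs ⟨i, hi⟩, I_odd d i hi]; simp
  push Not at hodd
  have he : ∀ i, Even (d i) := fun i => Nat.not_odd_iff_even.1 (hodd i)
  rcases even_cases d he hs with rfl | ⟨i, rfl⟩ | ⟨i, j, rfl⟩
  · rw [S_zero]; simp [I_one]
  · rw [S_two]
    simp only [prod_single, I_sq]
    have : ∑ k, (Pi.single i 2 : Fin 16 → ℕ) k = 2 := by simp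
    rw [this, sq3]; norm_num
  · rw [S_four]
    have : ∑ k, (Pi.single i 2 + Pi.single j 2 : Fin 16 → ℕ) k = 2 * 2 := by
      simp only [Pi.add_apply, Finset.sum_add_distrib]; simp
    rw [this, pow_mul, sq3]
    simp only [Pi.add_apply, pow_add, Finset.prod_mul_distrib, prod_single]
    by_cases h : i = j
    · subst h
      have h3 : (fun x : E 16 => x i ^ 2 * x i ^ 2) = fun x => x i ^ 4 := by ext x; ring
      rw [h3, I_four]; norm_num
    · rw [I_two_two i j h, if_neg h]; norm_num

lemma card_X : X19.ncard = 512 := by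
  rw [X19_eq, Set.InjOn.ncard_image nv_inj, Set.ncard_coe_finset, card_T]

lemma design : IsSphericalDesign X19 5 := by
  intro p hp
  rw [card_X, X19_eq, finsum_mem_image nv_inj, finsum_mem_coe_finset]
  change _ = I (fun x => MvPolynomial.eval (fun i => x i) p)
  simp only [MvPolynomial.eval_eq']
  rw [I_sum _ _ (fun d _ => by fun_prop), Finset.sum_comm, Finset.sum_div]
  apply Finset.sum_congr rfl
  intro d hd
  have hdeg : ∑ k, d k ≤ 5 := by
    have := (MvPolynomial.le_totalDegree hd).trans hp
    rwa [Finsupp.sum_fintype _ _ (fun _ => rfl)] at this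
  rw [I_smul, ← Finset.mul_sum, moment d hdeg]
  push_cast
  ring

end O16Aux

/-- The normalized norm-3 shell of `O₁₆` lies on the unit sphere, has exactly 512
elements, and is a spherical 5-design (so `O₁₆` is strongly perfect of minimum 3). -/
theorem O16_norm_three_shell_design :
    X19 ⊆ Metric.sphere (0 : E 16) 1 ∧ X19.Finite ∧ X19.ncard = 512 ∧
    IsSphericalDesign X19 5 := by
  refine ⟨?_, ?_, O16Aux.card_X, O16Aux.design⟩
  · rintro _ ⟨x, ⟨-, hx⟩, rfl⟩
    have h3 : ‖x‖ = Real.sqrt 3 := by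
      rw [← hx, Real.sqrt_sq (norm_nonneg _)]
    have hne : Real.sqrt 3 ≠ 0 := by positivity
    simp [norm_smul, h3, abs_of_nonneg (Real.sqrt_nonneg 3), hne]
  · rw [O16Aux.X19_eq]
    exact (Finset.finite_toSet _).image _
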